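/- arXiv:1906.03424 — 4 statements merged into one kernel-verified Lean document; each statement's English description precedes it below -/
import Mathlib

section
/- In the symmetric group on {1,2,3,4,5}, let σ be the 5-cycle (1 3 2 5 4), let α' = (2 3)(4 5) and β' = (2 4 5), and regard α, β : ℕ → Equiv.Perm (Fin 5) as the constant functions with values α' and β'. Then for every d : ℕ and every family g : Fin (2^d) → Equiv.Perm (Fin 5) such that each g i is either the identity 1 or σ, the balanced iterated commutator satisfies: B_{β,α}[g] = σ if g i = σ for all i, and B_{β,α}[g] = 1 otherwise. -/
/-!
The permutation `σ` satisfies `[σ^β', σ^α'] = σ`, whereas a commutator with a trivial entry is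
trivial. Hence on inputs from `{1, σ}` the operation `(x, y) ↦ [x^β', y^α']` is the Boolean AND
gate, with `σ` as true and `1` as false (Barrington's trick). The balanced iterated commutator
is a complete binary tree of such gates, so induction on its depth `d` shows that it computes
the conjunction of all its leaves.
-/

set_option autoImplicit false

/-- Conjugation `g^h = h⁻¹ * g * h`. -/
def conj' {G : Type*} [Group G] (g h : G) : G := h⁻¹ * g * h

/-- Commutator `[x, y] = x⁻¹ * y⁻¹ * x * y`. -/
def comm' {G : Type*} [Group G] (x y : G) : G := x⁻¹ * y⁻¹ * x * y

/-- Balanced iterated commutator `B_{β,α}[p]`. -/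
def balComm {G : Type*} [Group G] (β α : ℕ → G) : (d : ℕ) → (Fin (2 ^ d) → G) → G
  | 0, p => p ⟨0, by norm_num⟩
  | d + 1, p =>
      comm'
        (conj' (balComm β α d fun i => p ⟨2 ^ d + i.1, by
          have h := i.2; simp only [pow_succ]; omega⟩) (β d))
        (conj' (balComm β α d fun i => p ⟨i.1, by
          have h := i.2; simp only [pow_succ]; omega⟩) (α d))

/-- The 5-cycle `(1 3 2 5 4)`, written on `{0,…,4}` as `(0 2 1 4 3)`. -/
def σA5 : Equiv.Perm (Fin 5) := c[0, 2, 1, 4, 3]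

/-- The even permutation `(2 3)(4 5)`, written on `{0,…,4}` as `(1 2)(3 4)`. -/
def αA5 : Equiv.Perm (Fin 5) := c[1, 2] * c[3, 4]

/-- The even permutation `(2 4 5)`, written on `{0,…,4}` as `(1 3 4)`. -/
def βA5 : Equiv.Perm (Fin 5) := c[1, 3, 4]

/-- The identity that makes the gate work: `σ` is the commutator of two of its own conjugates. -/
theorem comm_conj_σA5 : comm' (conj' σA5 βA5) (conj' σA5 αA5) = σA5 := by
  decide +kernel

theorem comm_conj_one_left {G : Type*} [Group G] (x a b : G) :
    comm' (conj' 1 b) (conj' x a) = 1 := by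
  simp [comm', conj', mul_assoc]

theorem comm_conj_one_right {G : Type*} [Group G] (x a b : G) :
    comm' (conj' x b) (conj' 1 a) = 1 := by
  simp [comm', conj', mul_assoc]

/-- A property holds on all of `Fin (2 ^ (d + 1))` iff it holds on the upper and lower halves. -/
theorem forall_fin_two_pow_succ (d : ℕ) (P : Fin (2 ^ (d + 1)) → Prop) :
    (∀ i, P i) ↔
      (∀ i : Fin (2 ^ d), P ⟨2 ^ d + i.1, by have h := i.2; simp only [pow_succ]; omega⟩) ∧
      (∀ i : Fin (2 ^ d), P ⟨i.1, by have h := i.2; simp only [pow_succ]; omega⟩) := by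
  refine ⟨fun h => ⟨fun i => h _, fun i => h _⟩, ?_⟩
  rintro ⟨hu, hl⟩ ⟨i, hi⟩
  by_cases hid : i < 2 ^ d
  · exact hl ⟨i, hid⟩
  · have hlt : i - 2 ^ d < 2 ^ d := by rw [pow_succ] at hi; omega
    have hP := hu ⟨i - 2 ^ d, hlt⟩
    have he : 2 ^ d + (i - 2 ^ d) = i := by omega
    simpa only [he] using hP

theorem stmt_4 (d : ℕ) (g : Fin (2 ^ d) → Equiv.Perm (Fin 5))
    (hg : ∀ i, g i = 1 ∨ g i = σA5) :
    balComm (fun _ => βA5) (fun _ => αA5) d g =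
      if ∀ i, g i = σA5 then σA5 else 1 := by
  induction d with
  | zero =>
    have hall : (∀ i, g i = σA5) ↔ g ⟨0, by norm_num⟩ = σA5 :=
      ⟨fun h => h _, fun h i => by
        have hi : i = ⟨0, by norm_num⟩ := Fin.ext (by simp)
        rw [hi, h]⟩
    simp only [balComm, hall]
    split_ifs with h
    · exact h
    · exact (hg _).resolve_right h
  | succ d ih =>
    rw [balComm, ih _ fun i => hg _, ih _ fun i => hg _]
    simp only [forall_fin_two_pow_succ d fun i => g i = σA5]
    by_cases hu : ∀ i : Fin (2 ^ d),
        g ⟨2 ^ d + i.1, by have h := i.2; simp only [pow_succ]; omega⟩ = σA5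
    · by_cases hl : ∀ i : Fin (2 ^ d),
          g ⟨i.1, by have h := i.2; simp only [pow_succ]; omega⟩ = σA5
      · rw [if_pos hu, if_pos hl, if_pos ⟨hu, hl⟩, comm_conj_σA5]
      · rw [if_neg hl, comm_conj_one_right, if_neg fun h => hl h.2]
    · rw [if_neg hu, comm_conj_one_left, if_neg fun h => hu h.1]
end

section
/- Let F₃ be the free group on three generators a, b, c. Define α : ℕ → F₃ constant equal to 1, and β : ℕ → F₃ by β d = c if d is even and β d = b if d is odd. For d : ℕ let B₃(2^d) := B_{β,α}[p] where p : Fin (2^d) → F₃ is the constant family with value b⁻¹ * a. Then for every d the reduced word of B₃(2^d) is nonempty, its first letter is b⁻¹ if d is even and c⁻¹ if d is odd, and its last letter is a. -/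
/-!
Let `w = B₃(2^d)` and `t = β d`. Since all entries of the family agree,
`B₃(2^(d+1)) = t⁻¹ w⁻¹ t · w⁻¹ · t⁻¹ w t · w`. By induction `w` starts with `s⁻¹` and ends with `a`,
where `{s, t} = {b, c}`. Hence at each junction of the eight factors on the right, the two adjacent
letters involve different generators, so the concatenation of the reduced words is already reduced:
it starts with `t⁻¹` and ends with `a`. `HasEnds` records the first and last letter, and
`HasEnds.mul` is the absence of cancellation at a junction.
-/

set_option autoImplicit false

/-- Generator `a` of the free group `F₃`. -/
def fa : FreeGroup (Fin 3) := FreeGroup.of 0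
/-- Generator `b` of the free group `F₃`. -/
def fb : FreeGroup (Fin 3) := FreeGroup.of 1
/-- Generator `c` of the free group `F₃`. -/
def fc : FreeGroup (Fin 3) := FreeGroup.of 2

/-- `β d = c` for even `d` and `β d = b` for odd `d`. -/
def βF : ℕ → FreeGroup (Fin 3) := fun d => if Even d then fc else fb

/-- `B₃(2^d)`: the balanced iterated commutator of `2^d` copies of `b⁻¹ * a`. -/
def B3 (d : ℕ) : FreeGroup (Fin 3) :=
  balComm βF (fun _ => 1) d (fun _ => fb⁻¹ * fa)

/-- The reduced word of `g` is nonempty, with first letter `x` and last letter `y`. -/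
def HasEnds (g : FreeGroup (Fin 3)) (x y : Fin 3 × Bool) : Prop :=
  g.toWord.head? = some x ∧ g.toWord.getLast? = some y

theorem HasEnds.of (i : Fin 3) : HasEnds (FreeGroup.of i) (i, true) (i, true) := by
  simp [HasEnds, FreeGroup.toWord_of]

theorem HasEnds.inv {g : FreeGroup (Fin 3)} {x y : Fin 3 × Bool} (h : HasEnds g x y) :
    HasEnds g⁻¹ (y.1, !y.2) (x.1, !x.2) := by
  obtain ⟨h1, h2⟩ := h
  simp [HasEnds, FreeGroup.toWord_inv, FreeGroup.invRev, h1, h2]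

/-- If the letters meeting at the junction involve different generators, nothing cancels in the
product. -/
theorem HasEnds.mul {g h : FreeGroup (Fin 3)} {x y z w : Fin 3 × Bool}
    (hg : HasEnds g x y) (hh : HasEnds h z w) (hyz : y.1 ≠ z.1) : HasEnds (g * h) x w := by
  obtain ⟨g1, g2⟩ := hg
  obtain ⟨h1, h2⟩ := hh
  have hred : FreeGroup.IsReduced (g.toWord ++ h.toWord) := by
    refine List.isChain_append.2 ⟨FreeGroup.isReduced_toWord, FreeGroup.isReduced_toWord, ?_⟩
    intro p hp q hq hpq
    simp only [g2, h1, Option.mem_def, Option.some.injEq] at hp hq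
    subst hp hq
    exact absurd hpq hyz
  have hw : (g * h).toWord = g.toWord ++ h.toWord := by
    rw [FreeGroup.toWord_mul, hred.reduce_eq]
  simp [HasEnds, hw, g1, h2]

/-- The induction step: no cancellation occurs in `t⁻¹ w⁻¹ t · w⁻¹ · t⁻¹ w t · w`. -/
theorem HasEnds.step {w : FreeGroup (Fin 3)} {s t : Fin 3} (hw : HasEnds w (s, false) (0, true))
    (hst : s ≠ t) (ht : t ≠ 0) :
    HasEnds (comm' (conj' w (FreeGroup.of t)) (conj' w 1)) (t, false) (0, true) := by
  have e : comm' (conj' w (FreeGroup.of t)) (conj' w 1) =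
      (FreeGroup.of t)⁻¹ * w⁻¹ * FreeGroup.of t * w⁻¹ * (FreeGroup.of t)⁻¹ * w *
        FreeGroup.of t * w := by
    simp only [comm', conj']; group
  rw [e]
  have h := HasEnds.of t
  exact ((((((h.inv.mul hw.inv ht).mul h hst).mul hw.inv ht).mul h.inv hst).mul hw hst.symm).mul h
    ht.symm).mul hw hst.symm

theorem B3_succ (d : ℕ) : B3 (d + 1) = comm' (conj' (B3 d) (βF d)) (conj' (B3 d) 1) := rfl

theorem B3_hasEnds (d : ℕ) :
    HasEnds (B3 d) (if Even d then ((1 : Fin 3), false) else ((2 : Fin 3), false)) (0, true) := by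
  induction d with
  | zero => exact (HasEnds.of 1).inv.mul (HasEnds.of 0) (by decide)
  | succ d ih =>
    rw [B3_succ]
    by_cases hd : Even d
    · simp only [hd, if_true] at ih
      simpa [βF, hd, Nat.even_add_one, fc] using ih.step (t := 2) (by decide) (by decide)
    · simp only [hd, if_false] at ih
      simpa [βF, hd, Nat.even_add_one, fb] using ih.step (t := 1) (by decide) (by decide)

theorem stmt_6 (d : ℕ) :
    (B3 d).toWord ≠ [] ∧
    (B3 d).toWord.head? =
      some (if Even d then ((1 : Fin 3), false) else ((2 : Fin 3), false)) ∧
    (B3 d).toWord.getLast? = some ((0 : Fin 3), true) := by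
  refine ⟨fun h => ?_, B3_hasEnds d⟩
  have := (B3_hasEnds d).2
  simp [h] at this
end

section
/- Let G be a group, let α, β : ℕ → G, and let γ ∈ G commute with α d and with β d for every d : ℕ. Fix p ∈ G and define p_i := γ^(−i) * p * γ^i for i : ℕ. Then for every d : ℕ, the twisted balanced iterated commutator equals the ordinary one on the conjugated family: B^γ_{β,α}(p, d) = B_{β,α}[fun i : Fin (2^d) => p_i]. -/
/-!
A homomorphism `f : G →* G` fixing every `α d` and `β d` commutes with `balComm β α`
(`map_balComm`). Conjugation by `γ ^ (2 ^ d)` is such a homomorphism, so conjugating the balanced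
commutator of `p_0, …, p_{2^d - 1}` shifts all indices by `2 ^ d` and yields that of the upper half
`p_{2^d}, …, p_{2^(d+1) - 1}`. The theorem follows by induction on `d`.
-/

set_option autoImplicit false

/-- Twisted balanced iterated commutator `B^γ_{β,α}(p, d)`. -/
def twistComm {G : Type*} [Group G] (β α : ℕ → G) (γ p : G) : ℕ → G
  | 0 => p
  | d + 1 =>
      comm'
        (conj' ((γ ^ (2 ^ d))⁻¹ * twistComm β α γ p d * γ ^ (2 ^ d)) (β d))
        (conj' (twistComm β α γ p d) (α d))

theorem map_balComm {G : Type*} [Group G] (β α : ℕ → G) (f : G →* G)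
    (hα : ∀ d, f (α d) = α d) (hβ : ∀ d, f (β d) = β d) (d : ℕ) (q : Fin (2 ^ d) → G) :
    f (balComm β α d q) = balComm β α d (fun i => f (q i)) := by
  induction d with
  | zero => rfl
  | succ d ih =>
    simp only [balComm, comm', conj', map_mul, map_inv, hα, hβ, ih]

theorem conj_balComm {G : Type*} [Group G] (β α : ℕ → G) (c : G)
    (hα : ∀ d, Commute c (α d)) (hβ : ∀ d, Commute c (β d)) (d : ℕ) (q : Fin (2 ^ d) → G) :
    c⁻¹ * balComm β α d q * c = balComm β α d (fun i => c⁻¹ * q i * c) := by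
  have hfix : ∀ x, Commute c x → (MulAut.conj c⁻¹).toMonoidHom x = x := fun x hx => by
    simp [mul_assoc, ← hx.eq]
  simpa [MulAut.conj_apply] using
    map_balComm β α (MulAut.conj c⁻¹).toMonoidHom (fun d => hfix _ (hα d))
      (fun d => hfix _ (hβ d)) d q

theorem stmt_9 {G : Type*} [Group G] (α β : ℕ → G) (γ : G)
    (hα : ∀ d, γ * α d = α d * γ) (hβ : ∀ d, γ * β d = β d * γ)
    (p : G) (d : ℕ) :
    twistComm β α γ p d =
      balComm β α d (fun i : Fin (2 ^ d) => (γ ^ (i : ℕ))⁻¹ * p * γ ^ (i : ℕ)) := by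
  induction d with
  | zero => simp [twistComm, balComm]
  | succ d ih =>
    have hshift := conj_balComm β α (γ ^ 2 ^ d) (fun e => Commute.pow_left (hα e) _)
      (fun e => Commute.pow_left (hβ e) _) d
      (fun i : Fin (2 ^ d) => (γ ^ (i : ℕ))⁻¹ * p * γ ^ (i : ℕ))
    have hfam : (fun i : Fin (2 ^ d) =>
        (γ ^ 2 ^ d)⁻¹ * ((γ ^ (i : ℕ))⁻¹ * p * γ ^ (i : ℕ)) * γ ^ 2 ^ d) =
        fun i : Fin (2 ^ d) => (γ ^ (2 ^ d + (i : ℕ)))⁻¹ * p * γ ^ (2 ^ d + (i : ℕ)) := by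
      funext i
      rw [add_comm, pow_add, mul_inv_rev]
      simp only [mul_assoc]
    simp only [twistComm, balComm, ih, hshift, hfam]
end

section
/- Let Σ be a type with two distinct distinguished elements z and o, and let L : ℕ. Let Y ⊆ List Σ consist of the words [o,z,z], [o,z,o], [o,o,z] together with all words z :: w where w : List Σ has length L and all letters of w lie in {z, o}; let $ := [o,o,o]; let PPre Y be the set of proper prefixes of elements of Y (including []); and let Σ̃ := {a : Σ | a ≠ z ∧ a ≠ o}. If u : List Σ is not a prefix of any word of the form y ++ $ ++ v with y ∈ Y* and v : List Σ, then u can be written as u = y ++ w ++ [a] ++ v with y ∈ Y*, w ∈ PPre Y, a ∈ Σ̃ and v : List Σ. -/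
/-!
The set `Y ∪ {[o, o, o]}` is a complete code for infinite words over `{z, o}`: reading a word from
the left, either a whole codeword is found, or the word ends inside a codeword, or a letter outside
`{z, o}` interrupts a codeword after a proper prefix of it (`Yset_trichotomy`). In the first case
with a codeword in `Y`, that codeword is removed and the argument repeats on the shorter remainder.
If the process stops at `[o, o, o]` or at the end of the word, the word is a prefix of some
`y ++ [o, o, o] ++ v`; otherwise it stops at a foreign letter, which gives the required
factorization.
-/

set_option autoImplicit false

/-- The encoded alphabet `Y = {0, 1, #} ∪ Γ` over letters `z` (`⬜0`) and `o` (`⬜1`):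
the words `[o,z,z]`, `[o,z,o]`, `[o,o,z]` together with all words `z :: w` where
`w` has length `L` and all letters of `w` lie in `{z, o}`. -/
def Yset {σ : Type*} (z o : σ) (L : ℕ) : Set (List σ) :=
  {u | u = [o, z, z] ∨ u = [o, z, o] ∨ u = [o, o, z] ∨
       ∃ w : List σ, w.length = L ∧ (∀ a ∈ w, a = z ∨ a = o) ∧ u = z :: w}

/-- Finite concatenations of elements of `S` (the Kleene star `S*`). -/
def concatsOf {σ : Type*} (S : Set (List σ)) : Set (List σ) :=
  {u | ∃ ls : List (List σ), (∀ w ∈ ls, w ∈ S) ∧ u = ls.flatten}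

/-- The set of proper prefixes of elements of a set `S` of words. -/
def PPreS {σ : Type*} (S : Set (List σ)) : Set (List σ) :=
  {u | ∃ v ∈ S, ∃ x : List σ, x ≠ [] ∧ v = u ++ x}

/-- Reading `L` binary letters from `t`: either `L` of them are found, or `t` ends too early and can
be completed to a binary word of length `L`, or a letter other than `z`, `o` occurs first. -/
lemma binary_block {σ : Type*} (z o : σ) (L : ℕ) (t : List σ) :
    (∃ w : List σ, (w.length = L ∧ ∀ a ∈ w, a = z ∨ a = o) ∧ (w <+: t ∨ t <+: w)) ∨
    (∃ p x : List σ, x ≠ [] ∧ ((p ++ x).length = L ∧ ∀ a ∈ p ++ x, a = z ∨ a = o) ∧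
      ∃ a, (a ≠ z ∧ a ≠ o) ∧ ∃ v, t = p ++ a :: v) := by
  induction L generalizing t with
  | zero => exact .inl ⟨[], by simp⟩
  | succ L ih =>
    cases t with
    | nil =>
      exact .inl ⟨List.replicate (L + 1) z,
        ⟨by simp, fun a ha => .inl (List.eq_of_mem_replicate ha)⟩, .inr List.nil_prefix⟩
    | cons b t =>
      by_cases hb : b = z ∨ b = o
      · rcases ih t with ⟨w, ⟨hl, hw⟩, h⟩ | ⟨p, x, hx, ⟨hl, hw⟩, a, ha, v, rfl⟩
        · refine .inl ⟨b :: w, ⟨by simp [hl], by simpa [hb] using hw⟩, ?_⟩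
          simpa [List.cons_prefix_cons] using h
        · exact .inr ⟨b :: p, x, hx, ⟨by simpa using hl, List.forall_mem_cons.2 ⟨hb, hw⟩⟩,
            a, ha, v, rfl⟩
      · exact .inr ⟨[], List.replicate (L + 1) z, by simp,
          ⟨by simp, fun a ha => .inl (List.eq_of_mem_replicate ha)⟩, b, not_or.1 hb, t, rfl⟩

/-- Reading one codeword of `Y ∪ {[o, o, o]}`: `u` is comparable, in the prefix order, with a word
of `Y` or with `[o, o, o]`, or a letter other than `z`, `o` follows a proper prefix of a word
of `Y`. -/
lemma Yset_trichotomy {σ : Type*} (z o : σ) (L : ℕ) (u : List σ) :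
    (∃ w ∈ Yset z o L, w <+: u ∨ u <+: w) ∨
    (∃ v, u <+: [o, o, o] ++ v) ∨
    (∃ w ∈ PPreS (Yset z o L), ∃ a, (a ≠ z ∧ a ≠ o) ∧ ∃ v, u = w ++ a :: v) := by
  have hzz : [o, z, z] ∈ Yset z o L := .inl rfl
  have hzo : [o, z, o] ∈ Yset z o L := .inr (.inl rfl)
  have hoz : [o, o, z] ∈ Yset z o L := .inr (.inr (.inl rfl))
  rcases u with _ | ⟨a, u⟩
  · exact .inr (.inl ⟨[], List.nil_prefix⟩)
  by_cases haz : a = z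
  · subst haz
    rcases binary_block a o L u with ⟨w, ⟨hl, hw⟩, h⟩ | ⟨p, x, hx, ⟨hl, hw⟩, b, hb, v, rfl⟩
    · exact .inl ⟨a :: w, .inr (.inr (.inr ⟨w, hl, hw, rfl⟩)),
        by simpa [List.cons_prefix_cons] using h⟩
    · exact .inr (.inr ⟨a :: p, ⟨a :: (p ++ x), .inr (.inr (.inr ⟨_, hl, hw, rfl⟩)), x, hx, rfl⟩,
        b, hb, v, rfl⟩)
  by_cases hao : a = o
  swap
  · exact .inr (.inr ⟨[], ⟨_, hzz, _, by simp, rfl⟩, a, ⟨haz, hao⟩, u, rfl⟩)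
  subst hao
  rcases u with _ | ⟨b, u⟩
  · exact .inr (.inl ⟨[], by simp⟩)
  by_cases hb : b ≠ z ∧ b ≠ a
  · exact .inr (.inr ⟨[a], ⟨_, hzz, [z, z], by simp, rfl⟩, b, hb, u, rfl⟩)
  rcases u with _ | ⟨c, u⟩
  · by_cases hbz : b = z
    · exact .inl ⟨_, hzz, .inr (by simp [hbz])⟩
    · have hba : b = a := by tauto
      exact .inr (.inl ⟨[], by simp [hba]⟩)
  by_cases hc : c ≠ z ∧ c ≠ a
  · refine .inr (.inr ⟨[a, b], ?_, c, hc, u, rfl⟩)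
    by_cases hbz : b = z
    · exact ⟨_, hzz, [z], by simp, by simp [hbz]⟩
    · have hba : b = a := by tauto
      exact ⟨_, hoz, [z], by simp, by simp [hba]⟩
  have hb' : b = z ∨ b = a := by tauto
  have hc' : c = z ∨ c = a := by tauto
  rcases hb' with rfl | rfl <;> rcases hc' with rfl | rfl
  · exact .inl ⟨_, hzz, .inl ⟨u, rfl⟩⟩
  · exact .inl ⟨_, hzo, .inl ⟨u, rfl⟩⟩
  · exact .inl ⟨_, hoz, .inl ⟨u, rfl⟩⟩
  · exact .inr (.inl ⟨u, List.prefix_rfl⟩)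

lemma nil_mem_concatsOf {σ : Type*} (S : Set (List σ)) : [] ∈ concatsOf S :=
  ⟨[], by simp, rfl⟩

lemma append_mem_concatsOf {σ : Type*} {S : Set (List σ)} {w y : List σ} (hw : w ∈ S)
    (hy : y ∈ concatsOf S) : w ++ y ∈ concatsOf S := by
  obtain ⟨ls, hls, rfl⟩ := hy
  exact ⟨w :: ls, List.forall_mem_cons.2 ⟨hw, hls⟩, rfl⟩

lemma length_pos_of_mem_Yset {σ : Type*} {z o : σ} {L : ℕ} {w : List σ} (hw : w ∈ Yset z o L) :
    0 < w.length := by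
  rcases hw with rfl | rfl | rfl | ⟨w, -, -, rfl⟩ <;> simp

theorem stmt_15 {σ : Type*} (z o : σ) (hzo : z ≠ o) (L : ℕ) (u : List σ)
    (h : ¬ ∃ y ∈ concatsOf (Yset z o L), ∃ v : List σ, u <+: y ++ [o, o, o] ++ v) :
    ∃ y ∈ concatsOf (Yset z o L), ∃ w ∈ PPreS (Yset z o L), ∃ a : σ,
      (a ≠ z ∧ a ≠ o) ∧ ∃ v : List σ, u = y ++ w ++ [a] ++ v := by
  induction hn : u.length using Nat.strong_induction_on generalizing u with
  | _ n ih =>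
    subst hn
    rcases Yset_trichotomy z o L u with ⟨w, hw, ⟨t, rfl⟩ | hu⟩ | ⟨v, hv⟩ | ⟨w, hw, a, ha, v, rfl⟩
    · have hpos := length_pos_of_mem_Yset hw
      obtain ⟨y, hy, p, hp, a, ha, v, rfl⟩ := ih t.length (by simp; omega) t
        (fun ⟨y, hy, v, hv⟩ => h ⟨w ++ y, append_mem_concatsOf hw hy, v, by
          simpa [List.append_assoc] using hv⟩) rfl
      exact ⟨w ++ y, append_mem_concatsOf hw hy, p, hp, a, ha, v, by simp⟩
    · refine absurd ⟨w ++ [], append_mem_concatsOf hw (nil_mem_concatsOf _), [], ?_⟩ h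
      simpa using hu.trans (List.prefix_append w [o, o, o])
    · exact absurd ⟨[], nil_mem_concatsOf _, v, by simpa using hv⟩ h
    · exact ⟨[], nil_mem_concatsOf _, w, hw, a, ha, v, by simp⟩
end
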